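/- arXiv:2310.19219 — 2 statements merged into one kernel-verified Lean document; each statement's English description precedes it below -/
import Mathlib

section
/- (Graphical representation of the quasipotential) Let f : K → ℝ be centered, ⟨f⟩^s = 0. Then the unique solution V of the Poisson equation LV(x) + f(x) = 0 for all x ∈ K with ⟨V⟩^s = 0 is given by V(x) = ∑_y (w(x→y)/W) f(y), where w(x→y) is the total weight of all rooted spanning two-tree forests in which x and y lie in the same tree rooted at y, and W = ∑_y w(y) is the total weight of all rooted spanning trees. -/
/-!
Let `L` be the generator, `A n` the matrix whose `(x, z)` entry is the total weight of the rooted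
forests with `n` roots in which the root of `x` is `z`, and `T n` the total weight of all forests
with `n` roots. The key identity is `L * A (n + 1) = A n - T n • 1`: a forest in which `x` is not a
root is a forest in which `x` is a root, together with an arc from `x` into one of the other trees.
Expanding `L * A (n + 1)` in row `x`, the forests in which `x` is a root, with the arc `(x, u)`
supplied by `L` added, give the right-hand side, while in the remaining ones the given arc `(x, v)`
and the new arc `(x, u)` play symmetric roles and the contributions cancel.

Since `A n = 0` for large `n`, the identity also makes every `A n` a polynomial in `L`. Hence
`A 2 * L = A 1 - T 1 • 1`, and applying this to `V` with `L V = -f` gives `T 1 • V = A 2 f + A 1 V`,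
where `T 1 = W`. All rows of `A 1` equal `(w(y))`, and `ρ L = 0` turns the key identity into
`w(y) = W ρ(y)`, so `A 1 V = 0` when `V` is centered.
-/

open scoped Classical

/-- The backward generator `L` of the Markov jump process with rates `k`:
`L x y = k x y` for `x ≠ y` and `L x x = -∑_{z ≠ x} k x z`. -/
noncomputable def gen {K : Type*} [Fintype K] [DecidableEq K] (k : K → K → ℝ) :
    Matrix K K ℝ :=
  Matrix.of fun x y => if x = y then -∑ z ∈ Finset.univ.erase x, k x z else k x y

/-- Strong connectivity (irreducibility) of the digraph with an arc `(x,y)` whenever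
`k x y > 0`. -/
def StronglyConnected {K : Type*} (k : K → K → ℝ) : Prop :=
  ∀ x y : K, Relation.ReflTransGen (fun a b => 0 < k a b) x y

/-- A spanning rooted forest of the digraph of `k`, encoded functionally: each non-fixed
vertex `z` carries the single outgoing arc `(z, F z)`, every vertex eventually reaches a
fixed point (the root of its tree, toward which all arcs of the tree are directed, so there
are no cycles), and every arc is an arc of the digraph. -/
def IsSpForest {K : Type*} (k : K → K → ℝ) (F : K → K) : Prop :=
  (∀ z, ∃ n : ℕ, F (F^[n] z) = F^[n] z) ∧ ∀ z, F z ≠ z → 0 < k z (F z)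

/-- The weight of a forest: the product of the rates `k z (F z)` over its arcs. -/
noncomputable def forestWeight {K : Type*} [Fintype K] [DecidableEq K]
    (k : K → K → ℝ) (F : K → K) : ℝ :=
  ∏ z ∈ Finset.univ.filter (fun z => F z ≠ z), k z (F z)

/-- A spanning tree rooted at `x`: a spanning forest whose only root is `x`. -/
def IsSpTree {K : Type*} [Fintype K] [DecidableEq K] (k : K → K → ℝ) (F : K → K) (x : K) :
    Prop :=
  IsSpForest k F ∧ Finset.univ.filter (fun z => F z = z) = {x}

/-- `w(x)`: the total weight of all spanning trees rooted at `x`. -/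
noncomputable def treeWt {K : Type*} [Fintype K] [DecidableEq K] (k : K → K → ℝ) (x : K) : ℝ :=
  ∑ F ∈ Finset.univ.filter (fun F : K → K => IsSpTree k F x), forestWeight k F

/-- `W = ∑_x w(x)`: the total weight of all rooted spanning trees. -/
noncomputable def treeWtTotal {K : Type*} [Fintype K] [DecidableEq K] (k : K → K → ℝ) : ℝ :=
  ∑ x, treeWt k x

/-- A rooted spanning two-tree forest: a spanning forest with exactly two roots. -/
def IsTwoForest {K : Type*} [Fintype K] [DecidableEq K] (k : K → K → ℝ) (F : K → K) : Prop :=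
  IsSpForest k F ∧ (Finset.univ.filter (fun z => F z = z)).card = 2

/-- `w(x → y)`: the total weight of all rooted spanning two-tree forests in which `x` and `y`
lie in the same tree, that tree being rooted at `y`. -/
noncomputable def wTo {K : Type*} [Fintype K] [DecidableEq K] (k : K → K → ℝ) (x y : K) : ℝ :=
  ∑ F ∈ Finset.univ.filter
      (fun F : K → K => IsTwoForest k F ∧ F y = y ∧ ∃ n : ℕ, F^[n] x = y),
    forestWeight k F

/-- `w(x, z)`: the total weight of all rooted spanning two-tree forests in which `x` and `z`
lie in different trees and the tree containing `z` is rooted at `z`. -/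
noncomputable def wSep {K : Type*} [Fintype K] [DecidableEq K] (k : K → K → ℝ) (x z : K) : ℝ :=
  ∑ F ∈ Finset.univ.filter
      (fun F : K → K => IsTwoForest k F ∧ F z = z ∧ ¬∃ n : ℕ, F^[n] x = z),
    forestWeight k F

/-- `W₂`: the total weight of all rooted spanning two-tree forests. -/
noncomputable def wTwoTotal {K : Type*} [Fintype K] [DecidableEq K] (k : K → K → ℝ) : ℝ :=
  ∑ F ∈ Finset.univ.filter (fun F : K → K => IsTwoForest k F), forestWeight k F

section Quasipotential

open Finset Function Matrix

theorem sum_mul_mul_sub_eq_zero {ι R : Type*} [CommRing R] (s : Finset ι) (a b : ι → R) :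
    ∑ v ∈ s, ∑ u ∈ s, a v * (a u * (b u - b v)) = 0 := by
  simp only [mul_sub, sum_sub_distrib]
  rw [sub_eq_zero, sum_comm]
  exact sum_congr rfl fun _ _ => sum_congr rfl fun _ _ => mul_left_comm ..

section Iterate

variable {α : Type*} [DecidableEq α] {F : α → α} {u x : α}

theorem iterate_update_of_forall_ne (v : α) {n : ℕ} (h : ∀ m < n, F^[m] u ≠ x) :
    (update F x v)^[n] u = F^[n] u := by
  induction n with
  | zero => rfl
  | succ n ih =>
    rw [iterate_succ_apply', iterate_succ_apply', ih fun m hm => h m (hm.trans n.lt_succ_self),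
      update_of_ne (h n n.lt_succ_self)]

theorem exists_iterate_update_eq (v : α) (h : ∃ n, F^[n] u = x) :
    ∃ n, (update F x v)^[n] u = x :=
  ⟨Nat.find h, (iterate_update_of_forall_ne v fun _ => Nat.find_min h).trans (Nat.find_spec h)⟩

theorem isFixedPt_update_of_ne {z v : α} (hz : IsFixedPt F z) (hzx : z ≠ x) :
    IsFixedPt (update F x v) z := by
  rwa [IsFixedPt, update_of_ne hzx]

end Iterate

section RootedForest

variable {K : Type*} {F H : K → K} {u v x z : K}

/-- A rooted forest on the complete digraph over `K`, encoded as in `IsSpForest` by its successor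
map `F`, with the roots as fixed points. -/
def IsRootedForest (F : K → K) : Prop :=
  ∀ z, ∃ n : ℕ, IsFixedPt F (F^[n] z)

/-- The root of the tree containing `x` in the rooted forest with successor map `F`. The junk value
is `x` if no root can be reached from `x`, since `sInf ∅ = 0`. -/
noncomputable def forestRoot (F : K → K) (x : K) : K :=
  F^[sInf {n | IsFixedPt F (F^[n] x)}] x

theorem isFixedPt_forestRoot (h : ∃ n, IsFixedPt F (F^[n] x)) : IsFixedPt F (forestRoot F x) :=
  Nat.sInf_mem h

theorem forestRoot_eq_of_iterate_eq (hz : IsFixedPt F z) {n : ℕ} (hn : F^[n] x = z) :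
    forestRoot F x = z := by
  subst hn
  have hle : sInf {n | IsFixedPt F (F^[n] x)} ≤ n := Nat.sInf_le hz
  rw [← Nat.sub_add_cancel hle, iterate_add_apply]
  exact ((isFixedPt_forestRoot ⟨n, hz⟩).iterate _).symm

theorem forestRoot_eq_self (hx : IsFixedPt F x) : forestRoot F x = x :=
  forestRoot_eq_of_iterate_eq hx (n := 0) rfl

theorem ne_of_forestRoot_ne (hx : H x = x) (hv : forestRoot H v ≠ x) : v ≠ x := by
  rintro rfl
  exact hv (forestRoot_eq_self hx)

namespace IsRootedForest

theorem forestRoot_eq_iff (hF : IsRootedForest F) :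
    forestRoot F x = z ↔ IsFixedPt F z ∧ ∃ n, F^[n] x = z := by
  constructor
  · rintro rfl
    exact ⟨isFixedPt_forestRoot (hF x), _, rfl⟩
  · rintro ⟨hz, n, hn⟩
    exact forestRoot_eq_of_iterate_eq hz hn

theorem isFixedPt_of_isPeriodicPt (hF : IsRootedForest F) {n : ℕ} (hn : 0 < n)
    (hx : IsPeriodicPt F n x) : IsFixedPt F x := by
  obtain ⟨m, hm⟩ := hF x
  have hle : m ≤ n * m := Nat.le_mul_of_pos_left m hn
  have : x = F^[m] x := calc
    x = F^[n * m] x := (hx.mul_const m).eq.symm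
    _ = F^[n * m - m] (F^[m] x) := by rw [← iterate_add_apply, Nat.sub_add_cancel hle]
    _ = F^[m] x := (hm.iterate _).eq
  rwa [← this] at hm

variable [DecidableEq K]

theorem exists_iterate_update_eq_forestRoot (hH : IsRootedForest H) (hx : IsFixedPt H x)
    (hv : forestRoot H v ≠ x) (u : K) :
    ∃ n, (update H x v)^[n] u =
      if forestRoot H u = x then forestRoot H v else forestRoot H u := by
  have avoid {a : K} (ha : forestRoot H a ≠ x) : ∃ n, (update H x v)^[n] a = forestRoot H a :=
    ⟨_, iterate_update_of_forall_ne v fun _ _ h => ha (forestRoot_eq_of_iterate_eq hx h)⟩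
  split_ifs with hu
  · obtain ⟨n, hn⟩ := exists_iterate_update_eq v ((hH.forestRoot_eq_iff.1 hu).2)
    obtain ⟨m, hm⟩ := avoid hv
    refine ⟨m + (n + 1), ?_⟩
    rw [iterate_add_apply, iterate_succ_apply', hn, update_self, hm]
  · exact avoid hu

theorem isFixedPt_update_ite_forestRoot (hH : IsRootedForest H) (hv : forestRoot H v ≠ x)
    (u : K) : IsFixedPt (update H x v)
      (if forestRoot H u = x then forestRoot H v else forestRoot H u) := by
  split_ifs with hu
  · exact isFixedPt_update_of_ne (isFixedPt_forestRoot (hH v)) hv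
  · exact isFixedPt_update_of_ne (isFixedPt_forestRoot (hH u)) hu

theorem update_of_forestRoot_ne (hH : IsRootedForest H) (hx : IsFixedPt H x)
    (hv : forestRoot H v ≠ x) : IsRootedForest (update H x v) := by
  intro u
  obtain ⟨n, hn⟩ := hH.exists_iterate_update_eq_forestRoot hx hv u
  exact ⟨n, hn ▸ hH.isFixedPt_update_ite_forestRoot hv u⟩

theorem forestRoot_update (hH : IsRootedForest H) (hx : IsFixedPt H x) (hv : forestRoot H v ≠ x)
    (u : K) : forestRoot (update H x v) u =
      if forestRoot H u = x then forestRoot H v else forestRoot H u :=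
  have ⟨_, hn⟩ := hH.exists_iterate_update_eq_forestRoot hx hv u
  forestRoot_eq_of_iterate_eq (hH.isFixedPt_update_ite_forestRoot hv u) hn

theorem update_same (hF : IsRootedForest F) (x : K) : IsRootedForest (update F x x) := by
  intro u
  by_cases hu : ∃ n, F^[n] u = x
  · obtain ⟨n, hn⟩ := exists_iterate_update_eq x hu
    exact ⟨n, by rw [hn, IsFixedPt, update_self]⟩
  · push Not at hu
    obtain ⟨n, hn⟩ := hF u
    refine ⟨n, ?_⟩
    rw [iterate_update_of_forall_ne x fun m _ => hu m]
    exact isFixedPt_update_of_ne hn (hu n)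

theorem forestRoot_update_same_ne (hF : IsRootedForest F) (hx : ¬ IsFixedPt F x) :
    forestRoot (update F x x) (F x) ≠ x := by
  intro h
  have hcut : ∃ n, (update F x x)^[n] (F x) = x :=
    ((hF.update_same x).forestRoot_eq_iff.1 h).2
  obtain ⟨n, hn⟩ := exists_iterate_update_eq (F x) hcut
  rw [update_idem, update_eq_self, ← iterate_succ_apply] at hn
  exact hx (hF.isFixedPt_of_isPeriodicPt n.succ_pos hn)

end IsRootedForest

end RootedForest

section ForestSums

variable {K : Type*} [Fintype K] [DecidableEq K] {F H : K → K} {v x : K} {n : ℕ}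

theorem card_fixed_update_add_one (hx : H x = x) (hv : v ≠ x) :
    #{z | update H x v z = z} + 1 = #{z | H z = z} := by
  have : ({z | update H x v z = z} : Finset K) = ({z | H z = z} : Finset K).erase x := by
    ext z
    obtain rfl | hz := eq_or_ne z x
    · simp [hv]
    · simp [hz]
  rw [this, card_erase_add_one (by simpa using hx)]

theorem forestWeight_update (k : K → K → ℝ) (hx : H x = x) (hv : v ≠ x) :
    forestWeight k (update H x v) = forestWeight k H * k x v := by
  have hins : ({z | update H x v z ≠ z} : Finset K) =
      insert x ({z | H z ≠ z} : Finset K) := by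
    ext z
    obtain rfl | hz := eq_or_ne z x
    · simp [hv]
    · simp [hz]
  rw [forestWeight, forestWeight, hins, prod_insert (by simpa using hx), update_self, mul_comm]
  congr 1
  refine prod_congr rfl fun z hz => ?_
  rw [update_of_ne]
  rintro rfl
  exact (mem_filter.1 hz).2 hx

/-- The rooted forests on `K` with exactly `n` roots. -/
noncomputable def rootedForests (K : Type*) [Fintype K] [DecidableEq K] (n : ℕ) :
    Finset (K → K) :=
  {F | IsRootedForest F ∧ #{z | F z = z} = n}

theorem mem_rootedForests :
    F ∈ rootedForests K n ↔ IsRootedForest F ∧ #{z | F z = z} = n := by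
  simp only [rootedForests, mem_filter_univ]

theorem rootedForests_eq_empty (hn : Fintype.card K < n) : rootedForests K n = ∅ := by
  refine eq_empty_of_forall_notMem fun F hF => ?_
  rw [← (mem_rootedForests.1 hF).2] at hn
  exact hn.not_ge (card_le_univ _)

theorem update_mem_rootedForests (hH : H ∈ rootedForests K (n + 1)) (hx : H x = x)
    (hv : forestRoot H v ≠ x) : update H x v ∈ rootedForests K n := by
  rw [mem_rootedForests] at hH ⊢
  refine ⟨hH.1.update_of_forestRoot_ne hx hv, ?_⟩
  have := card_fixed_update_add_one hx (ne_of_forestRoot_ne hx hv)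
  lia

theorem update_same_mem_rootedForests (hF : F ∈ rootedForests K n) (hx : F x ≠ x) :
    update F x x ∈ rootedForests K (n + 1) := by
  rw [mem_rootedForests] at hF ⊢
  refine ⟨hF.1.update_same x, ?_⟩
  rw [← card_fixed_update_add_one (update_self x x F) hx, update_idem, update_eq_self, hF.2]

/-- `H` is `F` with its arc at `x` cut, and `v` is the target of that arc. -/
theorem sum_rootedForests_apply_ne {M : Type*} [AddCommMonoid M] (n : ℕ) (x : K)
    (φ : (K → K) → M) :
    ∑ F ∈ rootedForests K n with F x ≠ x, φ F =
      ∑ H ∈ rootedForests K (n + 1) with H x = x,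
        ∑ v with forestRoot H v ≠ x, φ (update H x v) := by
  rw [sum_sigma']
  refine sum_bij' (fun F _ => ⟨update F x x, F x⟩) (fun p _ => update p.1 x p.2) ?_ ?_ ?_ ?_ ?_
  · intro F hF
    obtain ⟨hF, hx⟩ := mem_filter.1 hF
    simp only [mem_sigma, mem_filter, mem_univ, true_and]
    exact ⟨⟨update_same_mem_rootedForests hF hx, update_self ..⟩,
      (mem_rootedForests.1 hF).1.forestRoot_update_same_ne hx⟩
  · rintro ⟨H, v⟩ hp
    simp only [mem_sigma, mem_filter, mem_univ, true_and] at hp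
    obtain ⟨⟨hH, hx⟩, hv⟩ := hp
    refine mem_filter.2 ⟨update_mem_rootedForests hH hx hv, ?_⟩
    rw [update_self]
    exact ne_of_forestRoot_ne hx hv
  · intro F _
    rw [update_idem, update_eq_self]
  · rintro ⟨H, v⟩ hp
    have hx : H x = x := (mem_filter.1 (mem_sigma.1 hp).1).2
    have hcut : update H x x = H := by rw [update_eq_iff]; exact ⟨hx.symm, fun _ _ => rfl⟩
    simp only [update_idem, update_self, hcut]
  · intro F _
    rw [update_idem, update_eq_self]

end ForestSums

section ForestMatrix

variable {K : Type*} [Fintype K] [DecidableEq K] (k : K → K → ℝ) (n : ℕ)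

/-- The matrix whose `(x, z)` entry is the total weight of the rooted forests with `n` roots in
which the root of `x` is `z`; for `n = 2` it is `w(x → z)`. Arcs of rate `0` are allowed, at
weight `0`. -/
noncomputable def forestMatrix : Matrix K K ℝ :=
  of fun x z => ∑ F ∈ rootedForests K n with forestRoot F x = z, forestWeight k F

/-- The total weight of the rooted forests with `n` roots. -/
noncomputable def forestTotal : ℝ :=
  ∑ F ∈ rootedForests K n, forestWeight k F

theorem gen_mulVec_apply (g : K → ℝ) (x : K) :
    (gen k *ᵥ g) x = ∑ u, k x u * (g u - g x) := by
  have hoff : ∑ u ∈ univ.erase x, gen k x u * g u = ∑ u ∈ univ.erase x, k x u * g u :=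
    sum_congr rfl fun u hu => by simp [gen, (ne_of_mem_erase hu).symm]
  rw [mulVec, dotProduct, ← add_sum_erase _ _ (mem_univ x), hoff,
    ← add_sum_erase univ (fun u => k x u * (g u - g x)) (mem_univ x)]
  simp only [gen, of_apply, if_true, sub_self, mul_zero, mul_sub, sum_sub_distrib, ← sum_mul]
  ring

theorem forestMatrix_mulVec (g : K → ℝ) :
    forestMatrix k n *ᵥ g = ∑ F ∈ rootedForests K n, forestWeight k F • g ∘ forestRoot F := by
  ext x
  simp only [mulVec, dotProduct, forestMatrix, of_apply, sum_filter, sum_mul, ite_mul, zero_mul,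
    Finset.sum_apply, Pi.smul_apply, Function.comp_apply, smul_eq_mul]
  rw [sum_comm]
  simp

theorem forestMatrix_mulVec_apply (g : K → ℝ) (x : K) :
    (forestMatrix k n *ᵥ g) x =
      ∑ F ∈ rootedForests K n, forestWeight k F * g (forestRoot F x) := by
  simp [forestMatrix_mulVec]

theorem sum_forestMatrix_apply (x : K) : ∑ z, forestMatrix k n x z = forestTotal k n := by
  simpa [mulVec, dotProduct, forestTotal] using forestMatrix_mulVec_apply k n 1 x

theorem sum_apply_ne_gen_mulVec_comp_forestRoot (g : K → ℝ) (x : K) :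
    ∑ F ∈ rootedForests K n with F x ≠ x,
      forestWeight k F * (gen k *ᵥ (g ∘ forestRoot F)) x = 0 := by
  rw [sum_rootedForests_apply_ne]
  refine sum_eq_zero fun H hH => ?_
  obtain ⟨hH, hx⟩ := mem_filter.1 hH
  have hforest : IsRootedForest H := (mem_rootedForests.1 hH).1
  calc
    _ = ∑ v with forestRoot H v ≠ x, forestWeight k H * ∑ u with forestRoot H u ≠ x,
          k x v * (k x u * (g (forestRoot H u) - g (forestRoot H v))) := by
      refine sum_congr rfl fun v hv => ?_
      have hv : forestRoot H v ≠ x := (mem_filter.1 hv).2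
      rw [forestWeight_update k hx (ne_of_forestRoot_ne hx hv), gen_mulVec_apply, mul_assoc,
        ← mul_sum, sum_filter]
      simp only [Function.comp_apply, hforest.forestRoot_update hx hv, forestRoot_eq_self hx,
        if_true]
      congr 2
      refine sum_congr rfl fun u _ => ?_
      split_ifs <;> simp_all
    _ = 0 := by
      rw [← mul_sum, sum_mul_mul_sub_eq_zero _ (k x) (fun u => g (forestRoot H u)), mul_zero]

theorem sum_apply_eq_gen_mulVec_comp_forestRoot (g : K → ℝ) (x : K) :
    ∑ F ∈ rootedForests K (n + 1) with F x = x,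
      forestWeight k F * (gen k *ᵥ (g ∘ forestRoot F)) x =
    ∑ F ∈ rootedForests K n with F x ≠ x, forestWeight k F * (g (forestRoot F x) - g x) := by
  rw [sum_rootedForests_apply_ne]
  refine sum_congr rfl fun H hH => ?_
  obtain ⟨hH, hx⟩ := mem_filter.1 hH
  rw [gen_mulVec_apply, mul_sum, sum_filter]
  refine sum_congr rfl fun v _ => ?_
  simp only [Function.comp_apply, forestRoot_eq_self hx]
  split_ifs with hv
  · rw [(mem_rootedForests.1 hH).1.forestRoot_update hx hv, forestRoot_eq_self hx, if_pos rfl,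
      forestWeight_update k hx (ne_of_forestRoot_ne hx hv), mul_assoc]
  · rw [not_not.1 hv, sub_self, mul_zero, mul_zero]

theorem gen_mulVec_forestMatrix_mulVec (g : K → ℝ) :
    gen k *ᵥ (forestMatrix k (n + 1) *ᵥ g) = forestMatrix k n *ᵥ g - forestTotal k n • g := by
  ext x
  calc
    (gen k *ᵥ (forestMatrix k (n + 1) *ᵥ g)) x
      = ∑ F ∈ rootedForests K (n + 1), forestWeight k F * (gen k *ᵥ (g ∘ forestRoot F)) x := by
      simp [forestMatrix_mulVec, mulVec_sum, mulVec_smul]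
    _ = ∑ F ∈ rootedForests K n with F x ≠ x,
          forestWeight k F * (g (forestRoot F x) - g x) := by
      rw [← sum_filter_add_sum_filter_not _ (fun F => F x = x),
        sum_apply_eq_gen_mulVec_comp_forestRoot]
      exact add_eq_left.2 (sum_apply_ne_gen_mulVec_comp_forestRoot k (n + 1) g x)
    _ = ∑ F ∈ rootedForests K n, forestWeight k F * (g (forestRoot F x) - g x) := by
      refine sum_filter_of_ne fun F _ h hx => h ?_
      rw [forestRoot_eq_self hx, sub_self, mul_zero]
    _ = (forestMatrix k n *ᵥ g - forestTotal k n • g) x := by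
      simp [forestMatrix_mulVec_apply, forestTotal, mul_sub, sum_mul]

theorem gen_mul_forestMatrix_succ :
    gen k * forestMatrix k (n + 1) = forestMatrix k n - forestTotal k n • 1 := by
  refine ext_of_mulVec_single fun z => ?_
  rw [← mulVec_mulVec, gen_mulVec_forestMatrix_mulVec, sub_mulVec, smul_mulVec, one_mulVec]

end ForestMatrix

section GeneratorAlgebra

variable {K : Type*} [Fintype K] [DecidableEq K]

theorem commute_gen_forestMatrix (k : K → K → ℝ) (n : ℕ) : Commute (gen k) (forestMatrix k n) := by
  by_cases hn : Fintype.card K < n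
  · have : forestMatrix k n = 0 := by ext; simp [forestMatrix, rootedForests_eq_empty hn]
    exact this ▸ Commute.zero_right _
  · have hsucc : forestMatrix k n = gen k * forestMatrix k (n + 1) + forestTotal k n • 1 := by
      rw [gen_mul_forestMatrix_succ, sub_add_cancel]
    rw [hsucc]
    exact ((Commute.refl _).mul_right (commute_gen_forestMatrix k (n + 1))).add_right
      ((Commute.one_right _).smul_right _)
  termination_by Fintype.card K + 1 - n

theorem vecMul_forestMatrix {k : K → K → ℝ} {ρ : K → ℝ} (hρ : ρ ᵥ* gen k = 0) (n : ℕ) :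
    ρ ᵥ* forestMatrix k n = forestTotal k n • ρ := by
  have h : ρ ᵥ* (gen k * forestMatrix k (n + 1)) = 0 := by rw [← vecMul_vecMul, hρ, zero_vecMul]
  rwa [gen_mul_forestMatrix_succ, vecMul_sub, vecMul_smul, vecMul_one, sub_eq_zero] at h

end GeneratorAlgebra

section SpanningForests

variable {K : Type*} [Fintype K] [DecidableEq K] {k : K → K → ℝ}

theorem forestWeight_pos {F : K → K} (hF : IsSpForest k F) : 0 < forestWeight k F :=
  prod_pos fun z hz => hF.2 z (mem_filter.1 hz).2

theorem isSpForest_of_forestWeight_ne_zero (hk : ∀ x y, x ≠ y → 0 ≤ k x y) {F : K → K}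
    (hF : IsRootedForest F) (hw : forestWeight k F ≠ 0) : IsSpForest k F :=
  ⟨hF, fun z hz => (hk z (F z) hz.symm).lt_of_ne'
    (prod_ne_zero_iff.1 hw z (mem_filter.2 ⟨mem_univ z, hz⟩))⟩

theorem forestMatrix_apply_eq_sum_isSpForest (hk : ∀ x y, x ≠ y → 0 ≤ k x y) (n : ℕ) (x z : K) :
    forestMatrix k n x z = ∑ F : K → K with
      (IsSpForest k F ∧ #{y | F y = y} = n) ∧ F z = z ∧ ∃ m : ℕ, F^[m] x = z,
      forestWeight k F := by
  symm
  refine sum_subset_zero_on_sdiff (fun F hF => ?_) (fun F hF => ?_) fun _ _ => rfl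
  · obtain ⟨⟨hF, hn⟩, hz⟩ := (mem_filter.1 hF).2
    exact mem_filter.2 ⟨mem_rootedForests.2 ⟨hF.1, hn⟩,
      (IsRootedForest.forestRoot_eq_iff hF.1).2 hz⟩
  · obtain ⟨hmem, hnot⟩ := mem_sdiff.1 hF
    obtain ⟨hmem, hz⟩ := mem_filter.1 hmem
    obtain ⟨hforest, hn⟩ := mem_rootedForests.1 hmem
    by_contra hw
    exact hnot (mem_filter.2 ⟨mem_univ F, ⟨isSpForest_of_forestWeight_ne_zero hk hforest hw, hn⟩,
      hforest.forestRoot_eq_iff.1 hz⟩)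

theorem wTo_eq_forestMatrix (hk : ∀ x y, x ≠ y → 0 ≤ k x y) (x y : K) :
    wTo k x y = forestMatrix k 2 x y := by
  rw [forestMatrix_apply_eq_sum_isSpForest hk, wTo]
  exact sum_congr (filter_congr fun _ _ => Iff.rfl) fun _ _ => rfl

theorem isSpTree_iff (F : K → K) (x y : K) :
    IsSpTree k F y ↔
      (IsSpForest k F ∧ #{z | F z = z} = 1) ∧ F y = y ∧ ∃ m : ℕ, F^[m] x = y := by
  constructor
  · rintro ⟨hF, hroots⟩
    have hfix (z : K) : F z = z ↔ z = y := by simpa using Finset.ext_iff.1 hroots z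
    obtain ⟨m, hm⟩ := hF.1 x
    exact ⟨⟨hF, by rw [hroots, card_singleton]⟩, (hfix y).2 rfl, m, (hfix _).1 hm⟩
  · rintro ⟨⟨hF, hcard⟩, hy, -⟩
    obtain ⟨c, hc⟩ := card_eq_one.1 hcard
    have hyc : y = c := by simpa [hy] using Finset.ext_iff.1 hc y
    exact ⟨hF, hyc ▸ hc⟩

theorem treeWt_eq_forestMatrix (hk : ∀ x y, x ≠ y → 0 ≤ k x y) (x y : K) :
    treeWt k y = forestMatrix k 1 x y := by
  rw [forestMatrix_apply_eq_sum_isSpForest hk, treeWt]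
  exact sum_congr (filter_congr fun F _ => isSpTree_iff F x y) fun _ _ => rfl

theorem treeWtTotal_eq_forestTotal (hk : ∀ x y, x ≠ y → 0 ≤ k x y) :
    treeWtTotal k = forestTotal k 1 := by
  obtain hK | ⟨⟨x⟩⟩ := isEmpty_or_nonempty K
  · simp [treeWtTotal, forestTotal, rootedForests_eq_empty]
  · rw [← sum_forestMatrix_apply k 1 x]
    exact sum_congr rfl fun y _ => treeWt_eq_forestMatrix hk x y

/-- The Markov chain tree theorem. -/
theorem treeWt_eq_treeWtTotal_mul (hk : ∀ x y, x ≠ y → 0 ≤ k x y) {ρ : K → ℝ}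
    (hρsum : ∑ x, ρ x = 1) (hρstat : ρ ᵥ* gen k = 0) (y : K) :
    treeWt k y = treeWtTotal k * ρ y := by
  have h := congr_fun (vecMul_forestMatrix hρstat 1) y
  simp only [vecMul, dotProduct, ← treeWt_eq_forestMatrix hk, ← sum_mul, hρsum, one_mul] at h
  rw [h, treeWtTotal_eq_forestTotal hk, Pi.smul_apply, smul_eq_mul]

end SpanningForests

section SpanningTreeExistence

theorem exists_rank_of_reflTransGen {α : Type*} {R : α → α → Prop} {r : α}
    (h : ∀ v, Relation.ReflTransGen R v r) :
    ∃ d : α → ℕ, ∀ v, v ≠ r → ∃ u, R v u ∧ d u < d v := by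
  let pre : Set α → Set α := fun S => {v | ∃ u ∈ S, R v u}
  have hreach (v : α) : ∃ n, v ∈ pre^[n] {r} := by
    induction h v using Relation.ReflTransGen.head_induction_on with
    | refl => exact ⟨0, rfl⟩
    | head hvu _ ih =>
      obtain ⟨n, hn⟩ := ih
      exact ⟨n + 1, by rw [iterate_succ_apply']; exact ⟨_, hn, hvu⟩⟩
  refine ⟨fun v => Nat.find (hreach v), fun v hv => ?_⟩
  have hmem := Nat.find_spec (hreach v)
  cases hm : Nat.find (hreach v) with
  | zero =>
    rw [hm] at hmem
    exact absurd hmem hv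
  | succ m =>
    rw [hm, iterate_succ_apply'] at hmem
    obtain ⟨u, hu, hvu⟩ := hmem
    exact ⟨u, hvu, (Nat.lt_succ_of_le (Nat.find_min' (hreach u) hu)).trans_eq hm.symm⟩

variable {K : Type*} [Fintype K] [DecidableEq K] {k : K → K → ℝ} {r : K}

theorem exists_isSpTree (hr : ∀ v, Relation.ReflTransGen (fun a b => 0 < k a b) v r) :
    ∃ F, IsSpTree k F r := by
  obtain ⟨d, hd⟩ := exists_rank_of_reflTransGen hr
  choose! next hnext hlt using hd
  let F : K → K := update next r r
  have hF {v : K} (hv : v ≠ r) : F v = next v := update_of_ne hv ..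
  have hFr : F r = r := update_self ..
  have hfix (v : K) : F v = v ↔ v = r := by
    refine ⟨fun h => ?_, fun h => h ▸ hFr⟩
    by_contra hv
    exact (hlt v hv).ne (congr_arg d ((hF hv).symm.trans h))
  have hreach (v : K) : ∃ n, F^[n] v = r := by
    induction v using (measure d).wf.induction with
    | h v ih =>
      by_cases hv : v = r
      · exact ⟨0, hv⟩
      · obtain ⟨n, hn⟩ := ih (next v) (hlt v hv)
        exact ⟨n + 1, by rwa [iterate_succ_apply, hF hv]⟩
  refine ⟨F, ⟨fun v => ?_, fun v hv => ?_⟩, ?_⟩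
  · obtain ⟨n, hn⟩ := hreach v
    exact ⟨n, by rw [hn, hFr]⟩
  · have hvr : v ≠ r := mt (hfix v).2 hv
    exact hF hvr ▸ hnext v hvr
  · ext v
    simp [hfix]

theorem treeWtTotal_pos (hr : ∀ v, Relation.ReflTransGen (fun a b => 0 < k a b) v r) :
    0 < treeWtTotal k := by
  have hpos {x : K} {F : K → K} (hF : F ∈ ({F | IsSpTree k F x} : Finset (K → K))) :
      0 < forestWeight k F := forestWeight_pos (mem_filter.1 hF).2.1
  obtain ⟨F, hF⟩ := exists_isSpTree hr
  exact sum_pos' (fun x _ => sum_nonneg fun F hF => (hpos hF).le)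
    ⟨r, mem_univ r, sum_pos (fun F hF => hpos hF) ⟨F, mem_filter.2 ⟨mem_univ F, hF⟩⟩⟩

end SpanningTreeExistence

section Poisson

variable {K : Type*} [Fintype K] [DecidableEq K] {k : K → K → ℝ} {ρ : K → ℝ}

theorem forestMatrix_one_mulVec_eq_zero (hk : ∀ x y, x ≠ y → 0 ≤ k x y) (hρsum : ∑ x, ρ x = 1)
    (hρstat : ρ ᵥ* gen k = 0) {g : K → ℝ} (hg : ρ ⬝ᵥ g = 0) : forestMatrix k 1 *ᵥ g = 0 := by
  ext x
  simp only [mulVec, dotProduct, ← treeWt_eq_forestMatrix hk,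
    treeWt_eq_treeWtTotal_mul hk hρsum hρstat, mul_assoc, ← mul_sum]
  exact mul_eq_zero_of_right _ hg

theorem gen_mulVec_eq_neg_and_centered_iff (hk : ∀ x y, x ≠ y → 0 ≤ k x y)
    (hW : treeWtTotal k ≠ 0) (hρsum : ∑ x, ρ x = 1) (hρstat : ρ ᵥ* gen k = 0) {f : K → ℝ}
    (hf : ρ ⬝ᵥ f = 0) (V : K → ℝ) :
    gen k *ᵥ V = -f ∧ ρ ⬝ᵥ V = 0 ↔ V = (treeWtTotal k)⁻¹ • (forestMatrix k 2 *ᵥ f) := by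
  have hA {g : K → ℝ} (hg : ρ ⬝ᵥ g = 0) :
      gen k *ᵥ (forestMatrix k 2 *ᵥ g) = -(treeWtTotal k • g) := by
    rw [gen_mulVec_forestMatrix_mulVec, forestMatrix_one_mulVec_eq_zero hk hρsum hρstat hg,
      zero_sub, treeWtTotal_eq_forestTotal hk]
  constructor
  · rintro ⟨hV, hcent⟩
    have h : forestMatrix k 2 *ᵥ f = treeWtTotal k • V := by
      rw [← neg_inj, ← mulVec_neg, ← hV, ← hA hcent, mulVec_mulVec, mulVec_mulVec,
        (commute_gen_forestMatrix k 2).eq]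
    rw [h, inv_smul_smul₀ hW]
  · rintro rfl
    constructor
    · rw [mulVec_smul, hA hf, smul_neg, inv_smul_smul₀ hW]
    · rw [dotProduct_smul, dotProduct_mulVec, vecMul_forestMatrix hρstat, smul_dotProduct, hf,
        smul_zero, smul_zero]

theorem quasipotential_graphical_representation_general {r : K}
    (hk : ∀ x y, x ≠ y → 0 ≤ k x y)
    (hr : ∀ x, Relation.ReflTransGen (fun a b => 0 < k a b) x r)
    (hρsum : ∑ x, ρ x = 1) (hρstat : ρ ᵥ* gen k = 0)
    {f : K → ℝ} (hf : ∑ x, f x * ρ x = 0) (V : K → ℝ) :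
    ((∀ x, (∑ y, k x y * (V y - V x)) + f x = 0) ∧ ∑ x, V x * ρ x = 0) ↔
      ∀ x, V x = ∑ y, wTo k x y / treeWtTotal k * f y := by
  have hpoisson : gen k *ᵥ V = -f ↔ ∀ x, (∑ y, k x y * (V y - V x)) + f x = 0 := by
    rw [eq_neg_iff_add_eq_zero, funext_iff]
    simp only [Pi.add_apply, gen_mulVec_apply, Pi.zero_apply]
  have hformula : V = (treeWtTotal k)⁻¹ • (forestMatrix k 2 *ᵥ f) ↔
      ∀ x, V x = ∑ y, wTo k x y / treeWtTotal k * f y := by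
    simp only [funext_iff, Pi.smul_apply, mulVec, dotProduct, ← wTo_eq_forestMatrix hk,
      smul_eq_mul, mul_sum, ← mul_assoc, inv_mul_eq_div]
  have hsol := gen_mulVec_eq_neg_and_centered_iff hk (treeWtTotal_pos hr).ne' hρsum hρstat
    ((dotProduct_comm ρ f).trans hf) V
  rwa [hpoisson, hformula, dotProduct_comm] at hsol

end Poisson

end Quasipotential

/-- Graphical representation of the quasipotential: the unique centered solution of
`LV + f = 0` is `V(x) = ∑_y (w(x→y)/W) f(y)`. -/
theorem quasipotential_graphical_representation
    {K : Type*} [Fintype K] [DecidableEq K] [Nonempty K]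
    (k : K → K → ℝ) (hk : ∀ x y : K, x ≠ y → 0 ≤ k x y)
    (hirr : StronglyConnected k)
    (ρ : K → ℝ) (hρpos : ∀ x, 0 < ρ x) (hρsum : ∑ x, ρ x = 1)
    (hρstat : Matrix.vecMul ρ (gen k) = 0)
    (f : K → ℝ) (hf : ∑ x, f x * ρ x = 0)
    (V : K → ℝ) (hV : ∀ x, (∑ y, k x y * (V y - V x)) + f x = 0)
    (hVcent : ∑ x, V x * ρ x = 0) :
    ∀ x, V x = ∑ y, wTo k x y / treeWtTotal k * f y := by
  exact (quasipotential_graphical_representation_general hk (hirr · (Classical.arbitrary K))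
    hρsum hρstat hf V).1 ⟨hV, hVcent⟩
end

section
/- For every x ∈ K, ∑_y ρ^s(y) τ(x,y) = W₂/W, where W₂ is the total weight of all rooted spanning two-tree forests (both trees carrying a root, summed over all choices of the two roots) and W is the total weight of all rooted spanning trees; in particular the left-hand side does not depend on x. Equivalently, ∑_y w(x,y) = W₂ for every x. -/
open scoped Classical

/-!
Fix `y`. A two-tree forest with root `y` that separates `x` from `y` and a state `z` form a pair
`(F, z)`; exchanging the value `F x` with `z` is an involution on all pairs which preserves the
product of the rate `k x z` and the weight of `F`. It turns the forests joining `z` but not `x`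
to `y` into those joining `x` but not `z` to `y`, except when `x` is a root: then the two trees
are merged into a spanning tree rooted at `y`. Hence `L w(·, y) = -w(y)` away from `y`, which is
`w(y)` times the equation for `τ(·, y)`, and the maximum principle gives `w(y) τ(x, y) = w(x, y)`.
Finally, every two-tree forest has exactly one root that is not reached from `x`, so that
summing `w(x, y)` over `y` counts it once.
-/

namespace SpanningForest

open Function Matrix

section Dynamics

variable {α : Type*} {F : α → α} {a b r s x z : α}

/-- `b` lies on the forward orbit of `a`: following the arcs `(v, F v)` leads from `a` to `b`. -/
def Reaches (F : α → α) (a b : α) : Prop := ∃ n : ℕ, F^[n] a = b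

lemma Reaches.refl (a : α) : Reaches F a a := ⟨0, rfl⟩

lemma Reaches.step (a : α) : Reaches F a (F a) := ⟨1, rfl⟩

lemma Reaches.trans {c : α} (hab : Reaches F a b) (hbc : Reaches F b c) : Reaches F a c := by
  obtain ⟨m, rfl⟩ := hab
  obtain ⟨n, rfl⟩ := hbc
  exact ⟨n + m, iterate_add_apply F n m a⟩

lemma Reaches.of_apply (h : Reaches F (F a) b) : Reaches F a b := (Reaches.step a).trans h

lemma Reaches.apply (h : Reaches F a b) (hab : a ≠ b) : Reaches F (F a) b := by
  obtain ⟨_ | n, hn⟩ := h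
  · exact absurd hn hab
  · exact ⟨n, hn⟩

lemma Reaches.eq_of_isFixedPt (h : Reaches F r b) (hr : IsFixedPt F r) : b = r := by
  obtain ⟨n, rfl⟩ := h
  exact hr.iterate n

lemma Reaches.total (hx : Reaches F a x) (hz : Reaches F a z) :
    Reaches F x z ∨ Reaches F z x := by
  obtain ⟨m, rfl⟩ := hx
  obtain ⟨n, rfl⟩ := hz
  refine (le_total m n).imp (fun h => ⟨n - m, ?_⟩) (fun h => ⟨m - n, ?_⟩) <;>
    rw [← iterate_add_apply, Nat.sub_add_cancel h]

lemma Reaches.reaches_isFixedPt (hx : Reaches F a x) (hr : Reaches F a r) (hfix : IsFixedPt F r) :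
    Reaches F x r :=
  (hx.total hr).elim id fun h => h.eq_of_isFixedPt hfix ▸ Reaches.refl _

lemma Reaches.isFixedPt_unique (hr : Reaches F a r) (hs : Reaches F a s) (hfr : IsFixedPt F r)
    (hfs : IsFixedPt F s) : s = r :=
  (hr.reaches_isFixedPt hs hfs).eq_of_isFixedPt hfr

/-- `F` encodes a rooted forest, its fixed points being the roots: every vertex is led to a
root, so that `F` has no cycle other than its fixed points. -/
def IsRootedForest (F : α → α) : Prop := ∀ a, ∃ r, IsFixedPt F r ∧ Reaches F a r

lemma isSpForest_iff {k : α → α → ℝ} :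
    IsSpForest k F ↔ IsRootedForest F ∧ ∀ z, F z ≠ z → 0 < k z (F z) := by
  simp [IsSpForest, IsRootedForest, IsFixedPt, Reaches]

lemma IsRootedForest.not_reaches_apply_self (hF : IsRootedForest F) (hx : F x ≠ x) :
    ¬ Reaches F (F x) x := by
  rintro ⟨m, hm⟩
  obtain ⟨r, hr, n, rfl⟩ := hF x
  have hper : IsPeriodicPt F (m + 1) x := hm
  have hback : Reaches F (F^[n] x) x :=
    ⟨n * m, by rw [← iterate_add_apply, ← Nat.mul_succ]; exact hper.const_mul n⟩
  have hroot : x = F^[n] x := hback.eq_of_isFixedPt hr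
  exact hx (hroot ▸ hr : IsFixedPt F x)

variable [DecidableEq α]

lemma Reaches.update_target (h : Reaches F a x) (z : α) : Reaches (update F x z) a x := by
  obtain ⟨n, hn⟩ := h
  induction n generalizing a with
  | zero => exact ⟨0, hn⟩
  | succ n ih =>
    obtain rfl | hax := eq_or_ne a x
    · exact Reaches.refl a
    · refine Reaches.of_apply ?_
      rw [update_of_ne hax]
      exact ih hn

lemma reaches_update_iff (h : ¬ Reaches F a x) :
    Reaches (update F x z) a b ↔ Reaches F a b := by
  have hiter (n : ℕ) : (update F x z)^[n] a = F^[n] a := by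
    induction n with
    | zero => rfl
    | succ n ih =>
      rw [iterate_succ_apply', iterate_succ_apply', ih, update_of_ne fun e => h ⟨n, e⟩]
  simp only [Reaches, hiter]

lemma reaches_update_self_iff (hzx : ¬ Reaches F z x) (hxb : x ≠ b) :
    Reaches (update F x z) x b ↔ Reaches F z b := by
  rw [← reaches_update_iff hzx]
  constructor
  · intro h
    simpa only [update_self] using h.apply hxb
  · intro h
    refine Reaches.of_apply ?_
    rwa [update_self]

lemma isFixedPt_update_self_iff : IsFixedPt (update F x z) x ↔ z = x := by
  rw [IsFixedPt, update_self]

lemma isFixedPt_update_of_ne (h : r ≠ x) :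
    IsFixedPt (update F x z) r ↔ IsFixedPt F r := by
  simp only [IsFixedPt, update_of_ne h]

lemma IsRootedForest.update_of_reaches (hF : IsRootedForest F)
    (hx : ∃ r, IsFixedPt (update F x z) r ∧ Reaches (update F x z) x r) :
    IsRootedForest (update F x z) := by
  intro a
  by_cases hax : Reaches F a x
  · obtain ⟨r, hr, hxr⟩ := hx
    exact ⟨r, hr, (hax.update_target z).trans hxr⟩
  · obtain ⟨r, hr, har⟩ := hF a
    have hrx : r ≠ x := fun e => hax (e ▸ har)
    exact ⟨r, (isFixedPt_update_of_ne hrx).2 hr, (reaches_update_iff hax).2 har⟩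

lemma IsRootedForest.update_of_not_reaches (hF : IsRootedForest F) (hzx : ¬ Reaches F z x) :
    IsRootedForest (update F x z) := by
  obtain ⟨r, hr, hzr⟩ := hF z
  have hrx : r ≠ x := fun e => hzx (e ▸ hzr)
  exact hF.update_of_reaches
    ⟨r, (isFixedPt_update_of_ne hrx).2 hr, (reaches_update_self_iff hzx hrx.symm).2 hzr⟩

lemma IsRootedForest.update_self (hF : IsRootedForest F) (x : α) :
    IsRootedForest (update F x x) :=
  hF.update_of_reaches ⟨x, isFixedPt_update_self_iff.2 rfl, Reaches.refl x⟩

/-- The exchange of arcs at `x`: the arc `(x, F x)` of `F` is replaced by `(x, z)`, and `z` by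
`F x`. Here `F x = x` or `z = x` stands for the absence of an arc. -/
def exchange (x : α) (p : (α → α) × α) : (α → α) × α := (update p.1 x p.2, p.1 x)

lemma exchange_involutive (x : α) : Involutive (exchange x) := by
  rintro ⟨F, z⟩
  simp [exchange]

end Dynamics

section Roots

variable {K : Type*} [Fintype K] [DecidableEq K] {F : K → K} {x y z : K}

/-- The roots of the forest encoded by `F`, which are its fixed points. -/
def roots (F : K → K) : Finset K := Finset.univ.filter fun z => F z = z

lemma mem_roots : z ∈ roots F ↔ IsFixedPt F z := by
  simp only [roots, Finset.mem_filter, Finset.mem_univ, true_and, IsFixedPt]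

lemma roots_update_of_ne (hzx : z ≠ x) : roots (update F x z) = (roots F).erase x := by
  ext v
  obtain rfl | hv := eq_or_ne v x
  · simp [mem_roots, IsFixedPt, hzx]
  · simp [mem_roots, isFixedPt_update_of_ne hv, hv]

lemma roots_update_self (F : K → K) (x : K) : roots (update F x x) = insert x (roots F) := by
  ext v
  obtain rfl | hv := eq_or_ne v x
  · simp [mem_roots, IsFixedPt]
  · simp [mem_roots, isFixedPt_update_of_ne hv, hv]

lemma IsRootedForest.card_roots_not_reached (hF : IsRootedForest F) (x : K) :
    ((roots F).filter fun r => ¬ Reaches F x r).card + 1 = (roots F).card := by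
  have hone : ((roots F).filter fun r => Reaches F x r).card = 1 := by
    obtain ⟨r, hr, hxr⟩ := hF x
    refine Finset.card_eq_one_iff_existsUnique.2 ⟨r, ?_, fun s hs => ?_⟩
    · exact Finset.mem_filter.2 ⟨mem_roots.2 hr, hxr⟩
    · obtain ⟨hs, hxs⟩ := Finset.mem_filter.1 hs
      exact hxr.isFixedPt_unique hxs hr (mem_roots.1 hs)
  rw [← (roots F).card_filter_add_card_filter_not fun r => Reaches F x r, hone, add_comm]

end Roots

section Exchange

variable {K : Type*} [Fintype K] [DecidableEq K] {F : K → K} {a b x y z : K}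

/-- `F` encodes a spanning tree rooted at `y`, whatever the rates of its arcs. -/
def IsTreeAt (F : K → K) (y : K) : Prop := IsRootedForest F ∧ roots F = {y}

/-- `F` encodes a two-tree forest, one of whose trees is rooted at `y` and contains `a` but
not `b`, whatever the rates of its arcs. -/
def Separates (F : K → K) (y a b : K) : Prop :=
  IsRootedForest F ∧ (roots F).card = 2 ∧ y ∈ roots F ∧ Reaches F a y ∧ ¬ Reaches F b y

lemma Separates.not_reaches (h : Separates F y a b) : ¬ Reaches F a b := by
  obtain ⟨-, -, hy, ha, hb⟩ := h
  exact fun hab => hb (hab.reaches_isFixedPt ha (mem_roots.1 hy))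

lemma Separates.ne (h : Separates F y a b) : a ≠ b :=
  fun e => h.not_reaches (e ▸ Reaches.refl a)

lemma Separates.ne_root (h : Separates F y a b) : b ≠ y := by
  rintro rfl
  exact h.2.2.2.2 (Reaches.refl b)

lemma Separates.update_of_not_isFixedPt (h : Separates F y z x) (hx : F x ≠ x) :
    Separates (update F x z) y x (F x) := by
  have hzx := h.not_reaches
  have hxy_ne := h.ne_root
  have hroots : roots (update F x z) = roots F := by
    rw [roots_update_of_ne h.ne, Finset.erase_eq_of_notMem (mt mem_roots.1 hx)]
  obtain ⟨hF, hcard, hy, hz, hxy⟩ := h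
  refine ⟨hF.update_of_not_reaches hzx, hroots ▸ hcard, hroots ▸ hy, ?_, ?_⟩
  · exact (reaches_update_self_iff hzx hxy_ne).2 hz
  · rw [reaches_update_iff (hF.not_reaches_apply_self hx)]
    exact fun h => hxy h.of_apply

lemma Separates.update_of_isFixedPt (h : Separates F y z x) (hx : IsFixedPt F x) :
    IsTreeAt (update F x z) y := by
  refine ⟨h.1.update_of_not_reaches h.not_reaches, ?_⟩
  rw [roots_update_of_ne h.ne]
  have hyx : y ≠ x := h.ne_root.symm
  obtain ⟨-, hcard, hy, -, -⟩ := h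
  have hcard' : ((roots F).erase x).card = 1 := by
    rw [Finset.card_erase_of_mem (mem_roots.2 hx), hcard]
  exact (Finset.eq_of_subset_of_card_le
    (Finset.singleton_subset_iff.2 (Finset.mem_erase.2 ⟨hyx, hy⟩)) hcard'.le).symm

lemma Separates.update_of_reaches (h : Separates F y x z) (hxy : x ≠ y) :
    Separates (update F x z) y (F x) x := by
  have hzx_ne : z ≠ x := h.ne.symm
  obtain ⟨hF, hcard, hy, hx, hz⟩ := h
  have hzx : ¬ Reaches F z x := fun h => hz (h.trans hx)
  have hfix : F x ≠ x := fun e => hxy (hx.eq_of_isFixedPt e).symm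
  have hroots : roots (update F x z) = roots F := by
    rw [roots_update_of_ne hzx_ne, Finset.erase_eq_of_notMem (mt mem_roots.1 hfix)]
  refine ⟨hF.update_of_not_reaches hzx, hroots ▸ hcard, hroots ▸ hy, ?_, ?_⟩
  · exact (reaches_update_iff (hF.not_reaches_apply_self hfix)).2 (hx.apply hxy)
  · rwa [reaches_update_self_iff hzx hxy]

lemma IsTreeAt.separates_update_self (h : IsTreeAt F y) (hxy : x ≠ y) :
    Separates (update F x x) y (F x) x := by
  obtain ⟨hF, hroots⟩ := h
  have hroot_iff (r : K) : IsFixedPt F r ↔ r = y := by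
    rw [← mem_roots, hroots, Finset.mem_singleton]
  have hroots' : roots (update F x x) = {x, y} := by rw [roots_update_self, hroots]
  refine ⟨hF.update_self x, hroots' ▸ Finset.card_pair hxy, by simp [hroots'], ?_, ?_⟩
  · rw [reaches_update_iff (hF.not_reaches_apply_self (mt (hroot_iff x).1 hxy))]
    obtain ⟨r, hr, hxr⟩ := hF (F x)
    exact (hroot_iff r).1 hr ▸ hxr
  · exact fun h => hxy (h.eq_of_isFixedPt (isFixedPt_update_self_iff.2 rfl)).symm

lemma separates_exchange_iff (hxy : x ≠ y) (p : (K → K) × K) :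
    Separates (exchange x p).1 y (exchange x p).2 x ↔
      Separates p.1 y x p.2 ∨ IsTreeAt p.1 y ∧ p.2 = x := by
  obtain ⟨F, z⟩ := p
  simp only [exchange]
  constructor
  · intro h
    obtain hzx | hzx := eq_or_ne z x
    · have hfix : IsFixedPt (update F x z) x := isFixedPt_update_self_iff.2 hzx
      exact .inr ⟨by simpa using h.update_of_isFixedPt hfix, hzx⟩
    · have hfix : update F x z x ≠ x := mt isFixedPt_update_self_iff.1 hzx
      exact .inl (by simpa using h.update_of_not_isFixedPt hfix)
  · rintro (h | ⟨h, rfl⟩)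
    · exact h.update_of_reaches hxy
    · exact h.separates_update_self hxy

end Exchange

section Weights

variable {K : Type*} [Fintype K] [DecidableEq K] {k : K → K → ℝ} {x y : K}

/-- The weight of the arc `(x, z)`, where `(x, x)` stands for the absence of an arc out of `x` and
has weight `1`. -/
noncomputable def arcWeight (k : K → K → ℝ) (x z : K) : ℝ := if z = x then 1 else k x z

lemma forestWeight_eq_prod_arcWeight (k : K → K → ℝ) (F : K → K) :
    forestWeight k F = ∏ v, arcWeight k v (F v) := by
  simp only [forestWeight, arcWeight, Finset.prod_filter, ne_eq, ite_not]

lemma arcWeight_mul_forestWeight_exchange (k : K → K → ℝ) (x : K) (p : (K → K) × K) :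
    arcWeight k x (exchange x p).2 * forestWeight k (exchange x p).1 =
      arcWeight k x p.2 * forestWeight k p.1 := by
  have hrest : ∏ v ∈ Finset.univ.erase x, arcWeight k v (update p.1 x p.2 v) =
      ∏ v ∈ Finset.univ.erase x, arcWeight k v (p.1 v) :=
    Finset.prod_congr rfl fun v hv => by rw [update_of_ne (Finset.ne_of_mem_erase hv)]
  simp only [exchange, forestWeight_eq_prod_arcWeight,
    ← Finset.mul_prod_erase _ _ (Finset.mem_univ x), hrest, update_self]
  ring

lemma sum_separates_exchange (k : K → K → ℝ) (hxy : x ≠ y) :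
    ∑ p : (K → K) × K with Separates p.1 y p.2 x, arcWeight k x p.2 * forestWeight k p.1 =
      ∑ p : (K → K) × K with Separates p.1 y x p.2, arcWeight k x p.2 * forestWeight k p.1 +
      ∑ p : (K → K) × K with IsTreeAt p.1 y ∧ p.2 = x,
        arcWeight k x p.2 * forestWeight k p.1 := by
  have hdisj : Disjoint
      (Finset.univ.filter fun p : (K → K) × K => Separates p.1 y x p.2)
      (Finset.univ.filter fun p : (K → K) × K => IsTreeAt p.1 y ∧ p.2 = x) := by
    refine Finset.disjoint_filter.2 fun p _ hsep htree => ?_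
    have hcard := hsep.2.1
    simp [htree.1.2] at hcard
  rw [← Finset.sum_union hdisj, ← Finset.filter_or]
  symm
  refine Finset.sum_equiv (exchange_involutive x).toPerm (fun p => ?_) (fun p _ => ?_)
  · simp only [Finset.mem_filter, Finset.mem_univ, true_and, Involutive.coe_toPerm,
      separates_exchange_iff hxy]
  · exact (arcWeight_mul_forestWeight_exchange k x p).symm

lemma sum_filter_pairs (k : K → K → ℝ) (x : K) (P : (K → K) → K → Prop)
    [∀ F, DecidablePred (P F)] :
    ∑ p : (K → K) × K with P p.1 p.2, arcWeight k x p.2 * forestWeight k p.1 =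
      ∑ z, arcWeight k x z * ∑ F with P F z, forestWeight k F := by
  simp only [Finset.sum_filter, Fintype.sum_prod_type_right, Finset.mul_sum, mul_ite, mul_zero]

-- A forest using an arc of rate zero has weight zero, so the arc condition may be dropped.
lemma sum_forestWeight_congr (hk : ∀ x y, x ≠ y → 0 ≤ k x y) {P Q : (K → K) → Prop}
    [DecidablePred P] [DecidablePred Q]
    (h : ∀ F, (∀ z, F z ≠ z → 0 < k z (F z)) → (P F ↔ Q F)) :
    ∑ F with P F, forestWeight k F = ∑ F with Q F, forestWeight k F := by
  simp only [Finset.sum_filter]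
  refine Finset.sum_congr rfl fun F _ => ?_
  by_cases hF : ∀ z, F z ≠ z → 0 < k z (F z)
  · exact if_congr (h F hF) rfl rfl
  · push Not at hF
    obtain ⟨z, hz, hle⟩ := hF
    have hzero : forestWeight k F = 0 :=
      Finset.prod_eq_zero (i := z) (by simp [hz]) (hle.antisymm (hk _ _ hz.symm))
    simp only [hzero, ite_self]

lemma treeWt_eq_sum_isTreeAt (hk : ∀ x y, x ≠ y → 0 ≤ k x y) (y : K) :
    treeWt k y = ∑ F with IsTreeAt F y, forestWeight k F :=
  sum_forestWeight_congr hk fun F hF => by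
    rw [IsSpTree, isSpForest_iff, and_iff_left hF]
    rfl

lemma wSep_eq_sum_not_reaches (hk : ∀ x y, x ≠ y → 0 ≤ k x y) (x y : K) :
    wSep k x y = ∑ F with IsRootedForest F ∧ (roots F).card = 2 ∧ y ∈ roots F ∧ ¬ Reaches F x y,
      forestWeight k F := by
  refine sum_forestWeight_congr hk fun F hF => ?_
  rw [IsTwoForest, isSpForest_iff, and_iff_left hF, and_assoc, mem_roots]
  rfl

lemma wSep_self (k : K → K → ℝ) (y : K) : wSep k y y = 0 :=
  Finset.sum_eq_zero fun _ hF => absurd (Reaches.refl y) (Finset.mem_filter.1 hF).2.2.2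

lemma wSep_sub_wSep (hk : ∀ x y, x ≠ y → 0 ≤ k x y) (x y z : K) :
    wSep k z y - wSep k x y =
      ∑ F with Separates F y x z, forestWeight k F -
        ∑ F with Separates F y z x, forestWeight k F := by
  simp only [wSep_eq_sum_not_reaches hk, Finset.sum_filter, ← Finset.sum_sub_distrib]
  refine Finset.sum_congr rfl fun F _ => ?_
  by_cases hx : Reaches F x y <;> by_cases hz : Reaches F z y <;> simp [Separates, hx, hz]

lemma sum_wSep (k : K → K → ℝ) (x : K) : ∑ y, wSep k x y = wTwoTotal k := by
  have hcount {F : K → K} (hF : IsTwoForest k F) :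
      (Finset.univ.filter fun y => F y = y ∧ ¬ ∃ n : ℕ, F^[n] x = y).card = 1 := by
    have h := (isSpForest_iff.1 hF.1).1.card_roots_not_reached x
    rw [show (roots F).card = 2 from hF.2, roots, Finset.filter_filter] at h
    exact Nat.succ_injective h
  simp only [wSep, wTwoTotal, Finset.sum_filter]
  rw [Finset.sum_comm]
  refine Finset.sum_congr rfl fun F _ => ?_
  by_cases hF : IsTwoForest k F
  · simp only [hF, true_and, if_true]
    rw [← Finset.sum_filter, Finset.sum_const, hcount hF, one_smul]
  · simp [hF]

end Weights

section Generator

variable {K : Type*} [Fintype K] [DecidableEq K] {k : K → K → ℝ} {y : K}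

lemma gen_mulVec_apply (k : K → K → ℝ) (g : K → ℝ) (x : K) :
    (gen k *ᵥ g) x = ∑ z, k x z * (g z - g x) := by
  have hoff : ∑ z ∈ Finset.univ.erase x, gen k x z * g z =
      ∑ z ∈ Finset.univ.erase x, k x z * g z :=
    Finset.sum_congr rfl fun z hz => by simp [gen, (Finset.ne_of_mem_erase hz).symm]
  have hdiag : gen k x x = -∑ z ∈ Finset.univ.erase x, k x z := by simp [gen]
  rw [mulVec, dotProduct, ← Finset.add_sum_erase _ _ (Finset.mem_univ x), hoff, hdiag,
    ← Finset.add_sum_erase _ (fun z => k x z * (g z - g x)) (Finset.mem_univ x)]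
  simp only [mul_sub, Finset.sum_sub_distrib, ← Finset.sum_mul]
  ring

lemma gen_mulVec_wSep (hk : ∀ x y, x ≠ y → 0 ≤ k x y) {x : K} (hxy : x ≠ y) :
    (gen k *ᵥ fun z => wSep k z y) x = -treeWt k y := by
  have harc (z : K) : k x z * (wSep k z y - wSep k x y) =
      arcWeight k x z * (wSep k z y - wSep k x y) := by
    obtain rfl | hzx := eq_or_ne z x
    · simp
    · rw [arcWeight, if_neg hzx]
  have htree : ∑ p : (K → K) × K with IsTreeAt p.1 y ∧ p.2 = x,
      arcWeight k x p.2 * forestWeight k p.1 = treeWt k y := by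
    rw [sum_filter_pairs k x fun F z => IsTreeAt F y ∧ z = x,
      Fintype.sum_eq_single x fun z hz => by simp [hz], treeWt_eq_sum_isTreeAt hk]
    simp [arcWeight]
  have hexchange := sum_separates_exchange k hxy
  rw [htree, sum_filter_pairs k x fun F z => Separates F y z x,
    sum_filter_pairs k x fun F z => Separates F y x z] at hexchange
  rw [gen_mulVec_apply, Finset.sum_congr rfl fun z _ => harc z]
  simp only [wSep_sub_wSep hk, mul_sub, Finset.sum_sub_distrib]
  rw [hexchange]
  ring

theorem le_of_gen_mulVec_nonneg (hk : ∀ x y, x ≠ y → 0 ≤ k x y)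
    (hreach : ∀ x, Relation.ReflTransGen (fun a b => 0 < k a b) x y) {g : K → ℝ}
    (hg : ∀ x, x ≠ y → 0 ≤ (gen k *ᵥ g) x) (x : K) : g x ≤ g y := by
  obtain ⟨m, -, hm⟩ := Finset.exists_max_image Finset.univ g ⟨x, Finset.mem_univ x⟩
  replace hm (z : K) : g z ≤ g m := hm z (Finset.mem_univ z)
  -- The maximum propagates along the arcs of a path from a maximizer to `y`.
  suffices hmax : ∀ a, Relation.ReflTransGen (fun a b => 0 < k a b) a y → g a = g m → g y = g m by
    exact (hm x).trans (hmax m (hreach m) rfl).ge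
  intro a hay
  induction hay using Relation.ReflTransGen.head_induction_on with
  | refl => exact id
  | @head a c hac _ ih =>
    intro ha
    obtain rfl | hne := eq_or_ne a y
    · exact ha
    have hterm (z : K) : k a z * (g z - g a) ≤ 0 := by
      obtain rfl | haz := eq_or_ne a z
      · simp
      · exact mul_nonpos_of_nonneg_of_nonpos (hk a z haz) (sub_nonpos.2 (ha ▸ hm z))
    have hsum : ∑ z, k a z * (g z - g a) = 0 :=
      (Finset.sum_nonpos fun z _ => hterm z).antisymm (gen_mulVec_apply k g a ▸ hg a hne)
    have hc : k a c * (g c - g a) = 0 :=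
      (Finset.sum_eq_zero_iff_of_nonpos fun z _ => hterm z).1 hsum c (Finset.mem_univ c)
    exact ih ((sub_eq_zero.1 ((mul_eq_zero.1 hc).resolve_left hac.ne')).trans ha)

theorem eq_of_gen_mulVec_eq_zero (hk : ∀ x y, x ≠ y → 0 ≤ k x y)
    (hreach : ∀ x, Relation.ReflTransGen (fun a b => 0 < k a b) x y) {g : K → ℝ}
    (hg : ∀ x, x ≠ y → (gen k *ᵥ g) x = 0) (x : K) : g x = g y := by
  refine (le_of_gen_mulVec_nonneg hk hreach (fun z hz => (hg z hz).ge) x).antisymm ?_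
  refine neg_le_neg_iff.1 (le_of_gen_mulVec_nonneg hk hreach (g := -g) (fun z hz => ?_) x)
  rw [mulVec_neg, Pi.neg_apply, hg z hz, neg_zero]

theorem treeWt_mul_eq_wSep (hk : ∀ x y, x ≠ y → 0 ≤ k x y)
    (hreach : ∀ x, Relation.ReflTransGen (fun a b => 0 < k a b) x y) {t : K → ℝ} (ht0 : t y = 0)
    (ht : ∀ x, x ≠ y → (gen k *ᵥ t) x = -1) (x : K) :
    treeWt k y * t x = wSep k x y := by
  have hharm (z : K) (hz : z ≠ y) :
      (gen k *ᵥ (treeWt k y • t - fun v => wSep k v y)) z = 0 := by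
    rw [mulVec_sub, mulVec_smul, Pi.sub_apply, Pi.smul_apply, ht z hz, gen_mulVec_wSep hk hz,
      smul_eq_mul]
    ring
  have h := eq_of_gen_mulVec_eq_zero hk hreach hharm x
  simpa [ht0, wSep_self, sub_eq_zero] using h

end Generator

end SpanningForest

/-- For every `x`, `∑_y ρˢ(y) τ(x,y) = W₂/W` (independently of `x`); equivalently,
`∑_y w(x,y) = W₂` for every `x`. -/
theorem mfpt_stationary_average
    {K : Type*} [Fintype K] [DecidableEq K]
    (k : K → K → ℝ) (hk : ∀ x y : K, x ≠ y → 0 ≤ k x y)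
    (hirr : StronglyConnected k)
    (ρ : K → ℝ) (hρpos : ∀ x, 0 < ρ x) (hρsum : ∑ x, ρ x = 1)
    (hρstat : Matrix.vecMul ρ (gen k) = 0)
    (hρkir : ∀ x, ρ x = treeWt k x / treeWtTotal k)
    (τ : K → K → ℝ) (hτ0 : ∀ z, τ z z = 0)
    (hτ : ∀ z x, x ≠ z → (∑ y, k x y * (τ y z - τ x z)) + 1 = 0) :
    (∀ x, ∑ y, ρ y * τ x y = wTwoTotal k / treeWtTotal k) ∧
    (∀ x, ∑ y, wSep k x y = wTwoTotal k) := by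
  have hτw (x y : K) : treeWt k y * τ x y = wSep k x y :=
    SpanningForest.treeWt_mul_eq_wSep (t := fun z => τ z y) hk (fun z => hirr z y) (hτ0 y)
      (fun z hz => by
        rw [SpanningForest.gen_mulVec_apply]
        exact eq_neg_of_add_eq_zero_left (hτ y z hz)) x
  refine ⟨fun x => ?_, SpanningForest.sum_wSep k⟩
  simp only [hρkir, div_mul_eq_mul_div, hτw, ← Finset.sum_div, SpanningForest.sum_wSep]
end
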